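/- Let Δ = n² − 4 for an integer n ≥ 0 with Δ a nonsquare. (1) If n is even, O_Δ is a maximal order (Δ is a fundamental discriminant), and the class number h_Δ = 1, then n ∈ {0, 4} (so Δ ∈ {−4, 12}). (2) If n ≡ 2 (mod 4) and n > 6, then the class number h_Δ is even, regardless of whether O_Δ is maximal; while for n = 6 (so Δ = 32), the class number is h_{32} = 1. -/

import Mathlib

noncomputable section

/-- A complex square root of an integer `d`. -/
def sqrtD (d : ℤ) : ℂ :=
  if 0 ≤ d then ((Real.sqrt d : ℝ) : ℂ) else Complex.I * ((Real.sqrt (-d) : ℝ) : ℂ)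

/-- The element `(Δ + √Δ)/2` generating the quadratic order of discriminant `Δ`. -/
def omegaD (d : ℤ) : ℂ := ((d : ℂ) + sqrtD d) / 2

/-- The quadratic order `O_Δ = ℤ[(Δ + √Δ)/2]` of discriminant `Δ`, as a subring of `ℂ`. -/
def QOrder (d : ℤ) : Subring ℂ := Subring.closure {omegaD d}

/-- The class number `h_Δ`: the order of the (wide) class group of `O_Δ`,
the group of invertible fractional ideals modulo principal fractional ideals. -/
def classNumber (d : ℤ) : ℕ := Nat.card (ClassGroup (QOrder d))

/-- `O_Δ` is a maximal order: every element of `ℚ(√Δ)` (the subfield of `ℂ` generated by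
`(Δ+√Δ)/2`) that is integral over `ℤ` already lies in `O_Δ`. -/
def IsMaximalOrder (d : ℤ) : Prop :=
  ∀ x ∈ Subfield.closure {omegaD d}, IsIntegral ℤ x → x ∈ QOrder d

open scoped nonZeroDivisors in
lemma even_card_of_ideal {R : Type*} [CommRing R] [IsDomain R] (I : Ideal R) (q : R) (hq : q ≠ 0)
    (h : I * I = Ideal.span {q}) (hI : ∀ x : R, I ≠ Ideal.span {x}) :
    Even (Nat.card (ClassGroup R)) := by
  have hq' : algebraMap R (FractionRing R) q ≠ 0 := by
    simpa using hq
  have h1 : (I : FractionalIdeal R⁰ (FractionRing R)) * I =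
      FractionalIdeal.spanSingleton R⁰ (algebraMap R (FractionRing R) q) := by
    rw [← FractionalIdeal.coeIdeal_mul, h, FractionalIdeal.coeIdeal_span_singleton]
  have h2 : (I : FractionalIdeal R⁰ (FractionRing R)) *
      (I * FractionalIdeal.spanSingleton R⁰ (algebraMap R (FractionRing R) q)⁻¹) = 1 := by
    rw [← mul_assoc, h1, FractionalIdeal.spanSingleton_mul_spanSingleton, mul_inv_cancel₀ hq',
      FractionalIdeal.spanSingleton_one]
  let U : (FractionalIdeal R⁰ (FractionRing R))ˣ := ⟨I, _, h2, by rw [mul_comm]; exact h2⟩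
  have hU : ClassGroup.mk (FractionRing R) U ≠ 1 := by
    intro hc
    obtain ⟨x, -, hx⟩ := (ClassGroup.mk_eq_one_of_coe_ideal (I := U) (I' := I) rfl).1 hc
    exact hI x hx
  have hU2 : ClassGroup.mk (FractionRing R) U ^ 2 = 1 := by
    rw [← map_pow]
    refine (ClassGroup.mk_eq_one_of_coe_ideal (I' := I * I) ?_).2 ⟨q, hq, h⟩
    rw [pow_two, FractionalIdeal.coeIdeal_mul]
    rfl
  have := orderOf_eq_prime hU2 hU
  rw [even_iff_two_dvd, ← this]
  exact orderOf_dvd_natCard _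

open scoped nonZeroDivisors in
lemma card_one_of_ideal {R : Type*} [CommRing R] [IsDomain R]
    (H : ∀ I J : Ideal R, ∀ c : R, c ≠ 0 → I * J = Ideal.span {c} → ∃ x, I = Ideal.span {x}) :
    Nat.card (ClassGroup R) = 1 := by
  rw [Nat.card_eq_one_iff_unique]
  refine ⟨⟨?_⟩, ⟨1⟩⟩
  suffices h : ∀ x : ClassGroup R, x = 1 by
    intro a b; rw [h a, h b]
  refine ClassGroup.induction (FractionRing R) fun I => ?_
  rw [ClassGroup.mk_eq_one_iff]
  apply FractionalIdeal.isPrincipal_of_isPrincipal_num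
  obtain ⟨x, hx⟩ := H (I : FractionalIdeal R⁰ (FractionRing R)).num
    (↑I⁻¹ : FractionalIdeal R⁰ (FractionRing R)).num
    ((I : FractionalIdeal R⁰ (FractionRing R)).den * (↑I⁻¹ : FractionalIdeal R⁰ (FractionRing R)).den)
    (mul_ne_zero (nonZeroDivisors.ne_zero (SetLike.coe_mem _))
      (nonZeroDivisors.ne_zero (SetLike.coe_mem _))) (by
      apply FractionalIdeal.coeIdeal_injective (K := FractionRing R)
      beta_reduce
      rw [FractionalIdeal.coeIdeal_mul, FractionalIdeal.coeIdeal_span_singleton,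
        ← FractionalIdeal.den_mul_self_eq_num', ← FractionalIdeal.den_mul_self_eq_num',
        mul_mul_mul_comm, ← Units.val_mul, mul_inv_cancel, Units.val_one, mul_one,
        FractionalIdeal.spanSingleton_mul_spanSingleton, map_mul])
  exact ⟨x, hx⟩

lemma sqrtD_four (D : ℤ) (hD : 0 ≤ D) : sqrtD (4 * D) = 2 * ((Real.sqrt D : ℝ) : ℂ) := by
  rw [sqrtD, if_pos (by omega)]
  push_cast
  rw [Real.sqrt_mul (by norm_num), show (4 : ℝ) = 2 ^ 2 by norm_num,
    Real.sqrt_sq (by norm_num)]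
  push_cast
  rfl

/-- the embedding of `ℤ√D` in `ℂ` -/
def zEmb (D : ℤ) (hD : 0 ≤ D) : ℤ√D →+* ℂ :=
  Zsqrtd.lift ⟨((Real.sqrt D : ℝ) : ℂ), by
    rw [← Complex.ofReal_mul, Real.mul_self_sqrt (by exact_mod_cast hD)]; simp⟩

lemma zEmb_apply (D : ℤ) (hD : 0 ≤ D) (z : ℤ√D) :
    zEmb D hD z = z.re + z.im * ((Real.sqrt D : ℝ) : ℂ) := rfl

lemma QOrder_eq (D : ℤ) (hD : 0 ≤ D) : QOrder (4 * D) = (zEmb D hD).range := by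
  have ho : omegaD (4 * D) = zEmb D hD ⟨2 * D, 1⟩ := by
    rw [omegaD, sqrtD_four D hD, zEmb_apply]
    push_cast
    ring
  apply le_antisymm
  · rw [QOrder, Subring.closure_le, Set.singleton_subset_iff, ho]
    exact ⟨_, rfl⟩
  · rintro _ ⟨z, rfl⟩
    have h1 : omegaD (4 * D) ∈ QOrder (4 * D) := Subring.subset_closure rfl
    have h2 : zEmb D hD z = ((z.re - z.im * (2 * D) : ℤ) : ℂ) + (z.im : ℤ) * omegaD (4 * D) := by
      rw [ho, zEmb_apply, zEmb_apply]
      push_cast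
      ring
    rw [h2]
    exact add_mem (intCast_mem _ _) (mul_mem (intCast_mem _ _) h1)

lemma zEmb_inj (D : ℤ) (hD : 0 ≤ D) (hs : ∀ n : ℤ, D ≠ n * n) : Function.Injective (zEmb D hD) :=
  Zsqrtd.lift_injective _ hs

lemma isDomain_z (D : ℤ) (hD : 0 ≤ D) (hs : ∀ n : ℤ, D ≠ n * n) : IsDomain (ℤ√D) :=
  (zEmb_inj D hD hs).isDomain _

lemma classNumber_eq (D : ℤ) (hD : 0 ≤ D) (hs : ∀ n : ℤ, D ≠ n * n) [IsDomain (ℤ√D)] :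
    classNumber (4 * D) = Nat.card (ClassGroup (ℤ√D)) := by
  have e : ℤ√D ≃+* QOrder (4 * D) :=
    (RingEquiv.ofLeftInverse (Function.leftInverse_invFun (zEmb_inj D hD hs))).trans
      (RingEquiv.subringCongr (QOrder_eq D hD).symm)
  exact (Nat.card_congr (ClassGroup.mulEquiv e).toEquiv).symm

lemma not_max : ¬ IsMaximalOrder 32 := by
  intro h
  have h8 : (32 : ℤ) = 4 * 8 := by norm_num
  rw [h8, IsMaximalOrder] at h
  set r : ℂ := ((Real.sqrt (8 : ℤ) : ℝ) : ℂ) with hr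
  have hr2 : r * r = 8 := by
    rw [hr, ← Complex.ofReal_mul, Real.mul_self_sqrt (by norm_num)]; simp
  have ho : omegaD (4 * 8) = 16 + r := by
    rw [omegaD, sqrtD_four 8 (by norm_num), ← hr]
    push_cast
    ring
  have hmem := h (r / 2) (by
    have h1 : omegaD (4 * 8) ∈ Subfield.closure {omegaD (4 * 8)} := Subfield.subset_closure rfl
    have h2 : r / 2 = (omegaD (4 * 8) - 16) / 2 := by rw [ho]; ring
    rw [h2]
    exact div_mem (sub_mem h1 (ofNat_mem _ 16)) (ofNat_mem _ 2)) (by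
    refine ⟨Polynomial.X ^ 2 - Polynomial.C 2, Polynomial.monic_X_pow_sub_C _ (by norm_num), ?_⟩
    simp only [Polynomial.eval₂_sub, Polynomial.eval₂_pow, Polynomial.eval₂_X, Polynomial.eval₂_C]
    simp only [eq_intCast, Int.cast_ofNat]
    linear_combination hr2 / 4)
  rw [QOrder_eq 8 (by norm_num)] at hmem
  obtain ⟨z, hz⟩ := hmem
  have h3 : zEmb 8 (by norm_num) (2 * z) = zEmb 8 (by norm_num) ⟨0, 1⟩ := by
    rw [map_mul, hz, map_ofNat, zEmb_apply, ← hr]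
    push_cast
    ring
  have h4 := zEmb_inj 8 (by norm_num) (by
    intro n hn
    have : n < 3 := by nlinarith
    have : -3 < n := by nlinarith
    interval_cases n <;> omega) h3
  have h5 := congrArg Zsqrtd.im h4
  simp at h5
  omega

/-- Descent for `q x² - 4 r y² = ±1`. -/
lemma descent1 (q r : ℤ) (hq : 3 ≤ q) (hr : 1 ≤ r) (hqr : (q - r) ^ 2 = 1) :
    ∀ k : ℕ, ∀ x y : ℤ, y.natAbs = k → (q * x ^ 2 - 4 * r * y ^ 2 = 1 ∨
      q * x ^ 2 - 4 * r * y ^ 2 = -1) → False := by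
  intro k
  induction k using Nat.strong_induction_on with
  | _ k ih =>
  suffices key : ∀ x y : ℤ, 0 ≤ x → 0 ≤ y → y.natAbs = k → (q * x ^ 2 - 4 * r * y ^ 2 = 1 ∨
      q * x ^ 2 - 4 * r * y ^ 2 = -1) → False by
    intro x y hy h
    exact key |x| |y| (abs_nonneg _) (abs_nonneg _) (by rw [Int.natAbs_abs]; exact hy) (by simpa using h)
  intro x y hx hy hk h
  have hy1 : 1 ≤ y := by
    by_contra hc
    have : y = 0 := by omega
    subst this
    have hx0 : x ≠ 0 := by rintro rfl; omega
    have : 0 < x ^ 2 := by positivity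
    rcases h with h | h <;> nlinarith
  have e : (q + r) ^ 2 = 4 * q * r + 1 := by linear_combination hqr
  have h1 : q * x < (q + r + 1) * y := by
    apply lt_of_pow_lt_pow_left₀ 2 (by positivity)
    rcases h with h | h <;> nlinarith [pow_le_pow_left₀ (by norm_num) hy1 2]
  have h2 : (q + r - 1) * y < q * x := by
    apply lt_of_pow_lt_pow_left₀ 2 (by positivity)
    have hy2 : 1 ≤ y ^ 2 := one_le_pow₀ hy1
    have e3 : (q * x) ^ 2 - ((q + r - 1) * y) ^ 2 =
      q * (q * x ^ 2 - 4 * r * y ^ 2) + (2 * q + 2 * r - 2) * y ^ 2 := by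
      linear_combination (-y ^ 2) * e
    rcases h with h | h <;> rw [h] at e3 <;> nlinarith
  refine ih ((q + r) * y - q * x).natAbs (by
    have e1 : (q + r) * y - q * x < y := by linarith
    have e2 : - y < (q + r) * y - q * x := by linarith
    omega) ((q + r) * x - 4 * r * y) _ rfl ?_
  have e2 : q * ((q + r) * x - 4 * r * y) ^ 2 - 4 * r * ((q + r) * y - q * x) ^ 2 =
    q * x ^ 2 - 4 * r * y ^ 2 := by
    linear_combination (q * x ^ 2 - 4 * r * y ^ 2) * e
  rwa [e2]

/-- Descent for `x² - (m² - 1) y² = ±2`. -/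
lemma descent2 (m : ℤ) (hm : 4 ≤ m) :
    ∀ k : ℕ, ∀ x y : ℤ, y.natAbs = k → (x ^ 2 - (m ^ 2 - 1) * y ^ 2 = 2 ∨
      x ^ 2 - (m ^ 2 - 1) * y ^ 2 = -2) → False := by
  intro k
  induction k using Nat.strong_induction_on with
  | _ k ih =>
  suffices key : ∀ x y : ℤ, 0 ≤ x → 0 ≤ y → y.natAbs = k → (x ^ 2 - (m ^ 2 - 1) * y ^ 2 = 2 ∨
      x ^ 2 - (m ^ 2 - 1) * y ^ 2 = -2) → False by
    intro x y hy h
    exact key |x| |y| (abs_nonneg _) (abs_nonneg _) (by rw [Int.natAbs_abs]; exact hy) (by simpa using h)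
  intro x y hx hy hk h
  have hy1 : 1 ≤ y := by
    by_contra hc
    have : y = 0 := by omega
    subst this
    have : x < 2 := by rcases h with h | h <;> nlinarith
    interval_cases x <;> omega
  have hy2 : 1 ≤ y ^ 2 := one_le_pow₀ hy1
  have h1 : x < (m + 1) * y := by
    apply lt_of_pow_lt_pow_left₀ 2 (by positivity)
    have e3 : ((m + 1) * y) ^ 2 - x ^ 2 =
      - (x ^ 2 - (m ^ 2 - 1) * y ^ 2) + (2 * m + 2) * y ^ 2 := by ring
    rcases h with h | h <;> rw [h] at e3 <;> nlinarith
  have h2 : (m - 1) * y < x := by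
    apply lt_of_pow_lt_pow_left₀ 2 (by positivity)
    have e3 : x ^ 2 - ((m - 1) * y) ^ 2 =
      (x ^ 2 - (m ^ 2 - 1) * y ^ 2) + (2 * m - 2) * y ^ 2 := by ring
    rcases h with h | h <;> rw [h] at e3 <;> nlinarith
  refine ih (m * y - x).natAbs ?_ (m * x - (m ^ 2 - 1) * y) _ rfl ?_
  · have e1 : m * y - x < y := by linarith
    have e2 : - y < m * y - x := by linarith
    omega
  have e2 : (m * x - (m ^ 2 - 1) * y) ^ 2 - (m ^ 2 - 1) * (m * y - x) ^ 2 =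
    x ^ 2 - (m ^ 2 - 1) * y ^ 2 := by ring
  rwa [e2]

lemma nonsq (m : ℤ) (hm : 2 ≤ m) : ∀ n : ℤ, m ^ 2 - 1 ≠ n * n := by
  intro n hn
  have h : |n| * |n| = m ^ 2 - 1 := by rw [abs_mul_abs_self, hn]
  have h0 := abs_nonneg n
  have : |n| < m := by nlinarith
  nlinarith

/-- If `I * I = (q)` and `I = (a)` then the norm of `a` is `± q`. -/
lemma norm_gen {D : ℤ} (q : ℤ) (a : ℤ√D)
    (h : Ideal.span {a} * Ideal.span {a} = Ideal.span {(q : ℤ√D)}) :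
    a.norm = q ∨ a.norm = -q := by
  rw [Ideal.span_singleton_mul_span_singleton] at h
  have h1 : a * a ∣ (q : ℤ√D) := by
    rw [← Ideal.mem_span_singleton, h]; exact Ideal.mem_span_singleton_self _
  have h2 : (q : ℤ√D) ∣ a * a := by
    rw [← Ideal.mem_span_singleton, ← h]; exact Ideal.mem_span_singleton_self _
  have h3 := map_dvd Zsqrtd.normMonoidHom h1
  have h4 := map_dvd Zsqrtd.normMonoidHom h2
  have h5 : a.norm * a.norm ∣ q * q := by simpa [Zsqrtd.normMonoidHom] using h3
  have h6 : q * q ∣ a.norm * a.norm := by simpa [Zsqrtd.normMonoidHom] using h4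
  have := Int.dvd_antisymm (mul_self_nonneg _) (mul_self_nonneg _) h5 h6
  exact mul_self_eq_mul_self_iff.1 this

lemma even_class_odd (D q r : ℤ) (hD : D = 4 * q * r) (hq : 3 ≤ q) (hqo : Odd q) (hr : 1 ≤ r) (hqr : (q - r) ^ 2 = 1)
    [IsDomain (ℤ√D)] :
    Even (Nat.card (ClassGroup (ℤ√D))) := by
  have hsq : (Zsqrtd.sqrtd * Zsqrtd.sqrtd : ℤ√D) = ((4 * q * r : ℤ) : ℤ√D) := by
    rw [← hD]; ext <;> simp
  have hI : Ideal.span {(q : ℤ√D), Zsqrtd.sqrtd} * Ideal.span {(q : ℤ√D), Zsqrtd.sqrtd}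
      = Ideal.span {(q : ℤ√D)} := by
    apply le_antisymm
    · rw [Ideal.span_pair_mul_span_pair, Ideal.span_le]
      rintro z hz
      simp only [Set.mem_insert_iff, Set.mem_singleton_iff] at hz
      rw [SetLike.mem_coe, Ideal.mem_span_singleton]
      rcases hz with rfl | rfl | rfl | rfl
      · exact dvd_mul_right _ _
      · exact dvd_mul_right _ _
      · exact dvd_mul_left _ _
      · rw [hsq]; exact Int.cast_dvd_cast _ _ ⟨4 * r, by ring⟩
    · rw [Ideal.span_singleton_le_iff_mem]
      have hcop : IsCoprime q (4 * r) := by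
        apply IsCoprime.mul_right
        · have : IsCoprime q 2 := (Int.isCoprime_two_right).2 hqo
          simpa using this.pow_right (n := 2)
        · refine ⟨q - r, -(q - r), ?_⟩
          linear_combination hqr
      obtain ⟨u, v, huv⟩ := hcop
      have e : (q : ℤ√D) = (u : ℤ√D) * ((q : ℤ√D) * (q : ℤ√D)) + (v : ℤ√D) * (Zsqrtd.sqrtd * Zsqrtd.sqrtd) := by
        rw [hsq]
        have := congrArg (fun z : ℤ => ((z * q : ℤ) : ℤ√D)) huv
        push_cast at this ⊢
        linear_combination -this
      have m1 : (q : ℤ√D) ∈ Ideal.span {(q : ℤ√D), Zsqrtd.sqrtd} :=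
        Ideal.subset_span (by simp)
      have m2 : (Zsqrtd.sqrtd : ℤ√D) ∈ Ideal.span {(q : ℤ√D), Zsqrtd.sqrtd} :=
        Ideal.subset_span (by simp)
      refine (congrArg (· ∈ _) e).mpr ?_
      exact add_mem (Ideal.mul_mem_left _ _ (Ideal.mul_mem_mul m1 m1))
        (Ideal.mul_mem_left _ _ (Ideal.mul_mem_mul m2 m2))
  refine even_card_of_ideal _ (q : ℤ√D) (by
    have : q ≠ 0 := by omega
    exact_mod_cast this) hI ?_
  intro a ha
  have hn := norm_gen q a (by rw [← ha]; exact hI)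
  have ham : a ∈ Ideal.span {(q : ℤ√D), Zsqrtd.sqrtd} := by
    rw [ha]; exact Ideal.mem_span_singleton_self a
  obtain ⟨b, c, hbc⟩ := Ideal.mem_span_pair.1 ham
  have hre : a.re = q * (b.re + 4 * r * c.im) := by
    rw [← hbc]; simp [hD]; ring
  rw [Zsqrtd.norm_def, hre] at hn
  generalize a.im = t at hn ⊢
  subst hD
  refine descent1 q r hq hr hqr _ (b.re + 4 * r * c.im) t rfl ?_
  have hq0 : q ≠ 0 := by omega
  refine hn.imp (fun h => ?_) (fun h => ?_) <;> apply mul_left_cancel₀ hq0 <;> linear_combination h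

lemma even_class_even (D m : ℤ) (hD : D = m ^ 2 - 1) (hm : 4 ≤ m) (hme : Even m) [IsDomain (ℤ√D)] :
    Even (Nat.card (ClassGroup (ℤ√D))) := by
  obtain ⟨k, rfl⟩ := hme
  set w : ℤ√D := 1 + Zsqrtd.sqrtd with hw
  have hsq : w * w = 2 * (w + ((2 * k ^ 2 - 1 : ℤ) : ℤ√D)) := by
    have h1 : w * w = 2 * w + ((D - 1 : ℤ) : ℤ√D) := by
      ext
      · simp [hw]; ring
      · simp [hw]
    rw [h1, show D - 1 = 2 * (2 * k ^ 2 - 1) by rw [hD]; ring]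
    push_cast
    ring
  have hI : Ideal.span {((2 : ℤ) : ℤ√D), w} * Ideal.span {((2 : ℤ) : ℤ√D), w}
      = Ideal.span {((2 : ℤ) : ℤ√D)} := by
    have m1 : ((2 : ℤ) : ℤ√D) ∈ Ideal.span {((2 : ℤ) : ℤ√D), w} :=
        Ideal.subset_span (by simp)
    have m2 : w ∈ Ideal.span {((2 : ℤ) : ℤ√D), w} :=
        Ideal.subset_span (by simp)
    apply le_antisymm
    · rw [Ideal.span_pair_mul_span_pair, Ideal.span_le]
      rintro z hz
      simp only [Set.mem_insert_iff, Set.mem_singleton_iff] at hz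
      rw [SetLike.mem_coe, Ideal.mem_span_singleton]
      rcases hz with rfl | rfl | rfl | rfl
      · exact dvd_mul_right _ _
      · exact dvd_mul_right _ _
      · exact dvd_mul_left _ _
      · rw [hsq]; exact_mod_cast dvd_mul_right _ _
    · rw [Ideal.span_singleton_le_iff_mem]
      have e : ((2 : ℤ) : ℤ√D) = ((k ^ 2 : ℤ) : ℤ√D) * (((2 : ℤ) : ℤ√D) * ((2 : ℤ) : ℤ√D))
          + (-1) * (w * w) + ((2 : ℤ) : ℤ√D) * w := by
        rw [hsq]
        push_cast
        ring
      refine (congrArg (· ∈ _) e).mpr ?_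
      exact add_mem (add_mem (Ideal.mul_mem_left _ _ (Ideal.mul_mem_mul m1 m1))
        (Ideal.mul_mem_left _ _ (Ideal.mul_mem_mul m2 m2))) (Ideal.mul_mem_mul m1 m2)
  refine even_card_of_ideal _ ((2 : ℤ) : ℤ√D) (by
    have : (2 : ℤ) ≠ 0 := by omega
    exact_mod_cast this) hI ?_
  intro a ha
  have hn := norm_gen 2 a (by rw [← ha]; exact hI)
  rw [Zsqrtd.norm_def] at hn
  refine descent2 (k + k) hm _ a.re a.im rfl ?_
  rw [← hD]
  refine hn.imp (fun h => ?_) (fun h => ?_) <;> linarith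

lemma nonsq2 : ∀ n : ℤ, (2 : ℤ) ≠ n * n := by
  intro n hn
  have : n < 2 := by nlinarith
  have : -2 < n := by nlinarith
  interval_cases n <;> omega

lemma nonsq8 : ∀ n : ℤ, (8 : ℤ) ≠ n * n := by
  intro n hn
  have : n < 3 := by nlinarith
  have : -3 < n := by nlinarith
  interval_cases n <;> omega

lemma exists_round (p N : ℤ) (hN : N ≠ 0) : ∃ a : ℤ, 2 * |p - a * N| ≤ |N| := by
  refine ⟨round ((p : ℚ) / N), ?_⟩
  have h := abs_sub_round ((p : ℚ) / N)
  have hN' : (N : ℚ) ≠ 0 := by exact_mod_cast hN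
  generalize round ((p : ℚ) / N) = a at *
  have e : (p : ℚ) - a * N = (p / N - a) * N := by field_simp
  have : (2 : ℚ) * |(p : ℚ) - a * N| ≤ |(N : ℚ)| := by
    rw [e, abs_mul]
    nlinarith [abs_nonneg (N : ℚ)]
  exact_mod_cast this

lemma ideal_z2 (L : Ideal (ℤ√2)) : ∃ b, L = Ideal.span {b} := by
  by_cases hL : L = ⊥
  · exact ⟨0, by simp [hL]⟩
  obtain ⟨z, hz, hz0⟩ := Submodule.exists_mem_ne_zero_of_ne_bot hL
  have hex : ∃ k : ℕ, ∃ z ∈ L, z ≠ 0 ∧ z.norm.natAbs = k := ⟨_, z, hz, hz0, rfl⟩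
  classical
  obtain ⟨b, hb, hb0, hbk⟩ := Nat.find_spec hex
  refine ⟨b, le_antisymm ?_ ((Ideal.span_singleton_le_iff_mem _).2 hb)⟩
  intro g hg
  have hN : b.norm ≠ 0 := fun h => hb0 ((Zsqrtd.norm_eq_zero nonsq2 b).1 h)
  obtain ⟨x, hx⟩ := exists_round (g * star b).re b.norm hN
  obtain ⟨y, hy⟩ := exists_round (g * star b).im b.norm hN
  set s : ℤ√2 := ⟨x, y⟩ with hs
  set δ : ℤ√2 := g - s * b with hδ
  have hδL : δ ∈ L := sub_mem hg (L.mul_mem_left _ hb)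
  have e1 : δ * star b = g * star b - s * (b.norm : ℤ√2) := by
    rw [Zsqrtd.norm_eq_mul_conj, hδ]; ring
  have hre : (δ * star b).re = (g * star b).re - x * b.norm := by
    rw [e1]; simp [hs]
  have him : (δ * star b).im = (g * star b).im - y * b.norm := by
    rw [e1]; simp [hs]
  have hn : (δ * star b).norm = δ.norm * b.norm := by rw [Zsqrtd.norm_mul, Zsqrtd.norm_conj]
  rw [Zsqrtd.norm_def, hre, him] at hn
  generalize (g * star b).re - x * b.norm = u at *
  generalize (g * star b).im - y * b.norm = v at *
  have hlt : |δ.norm| < |b.norm| := by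
    have hNp : 0 < |b.norm| := abs_pos.2 hN
    have hu : 4 * u ^ 2 ≤ |b.norm| ^ 2 := by
      rw [← sq_abs u]; nlinarith [abs_nonneg u]
    have hv : 4 * v ^ 2 ≤ |b.norm| ^ 2 := by
      rw [← sq_abs v]; nlinarith [abs_nonneg v]
    have h3 : |δ.norm| * |b.norm| < |b.norm| * |b.norm| := by
      rw [← abs_mul, ← hn, abs_lt]
      constructor <;> nlinarith [sq_nonneg u, sq_nonneg v]
    exact lt_of_mul_lt_mul_right h3 hNp.le
  have hδ0 : δ = 0 := by
    by_contra h0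
    refine Nat.find_min hex (m := δ.norm.natAbs) ?_ ⟨δ, hδL, h0, rfl⟩
    rw [← hbk]; zify; exact hlt
  rw [Ideal.mem_span_singleton]
  exact ⟨s, by rw [mul_comm]; exact sub_eq_zero.1 hδ0⟩

/-- The inclusion `ℤ[2√2] → ℤ[√2]`. -/
def phi : ℤ√8 →+* ℤ√2 := Zsqrtd.lift ⟨⟨0, 2⟩, by ext <;> simp⟩

lemma phi_apply (z : ℤ√8) : phi z = ⟨z.re, 2 * z.im⟩ := by
  ext <;> simp [phi, mul_comm]

lemma phi_inj : Function.Injective phi := by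
  intro a b h
  rw [phi_apply, phi_apply] at h
  have h1 := congrArg Zsqrtd.re h
  have h2 := congrArg Zsqrtd.im h
  simp only at h1 h2
  ext <;> omega

lemma two_mul_mem (I : Ideal (ℤ√8)) (z : ℤ√2) (hz : z ∈ I.map phi) :
    ∀ s : ℤ√2, ∃ i ∈ I, phi i = 2 * s * z := by
  induction hz using Submodule.span_induction with
  | mem x h =>
    obtain ⟨i, hi, rfl⟩ := h
    intro s
    refine ⟨⟨2 * s.re, s.im⟩ * i, I.mul_mem_left _ hi, ?_⟩
    rw [map_mul]
    congr 1
    rw [phi_apply]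
    ext <;> simp
  | zero => intro s; exact ⟨0, I.zero_mem, by simp⟩
  | add x y _ _ hx hy =>
    intro s
    obtain ⟨i, hi, hi'⟩ := hx s
    obtain ⟨j, hj, hj'⟩ := hy s
    exact ⟨i + j, I.add_mem hi hj, by rw [map_add, hi', hj']; ring⟩
  | smul a x _ hx =>
    intro s
    obtain ⟨i, hi, hi'⟩ := hx (s * a)
    exact ⟨i, hi, by rw [hi', smul_eq_mul]; ring⟩

lemma principal_z8 (I J : Ideal (ℤ√8)) (c : ℤ√8) (hc : c ≠ 0) (hIJ : I * J = Ideal.span {c}) :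
    ∃ x, I = Ideal.span {x} := by
  have := isDomain_z 2 (by norm_num) nonsq2
  obtain ⟨β, hβ⟩ := ideal_z2 (I.map phi)
  have hphic : phi c ≠ 0 := fun h => hc (phi_inj (by rw [h, map_zero]))
  have hmem : ∀ i ∈ I, ∃ m, phi i = β * m := by
    intro i hi
    have : phi i ∈ I.map phi := Ideal.mem_map_of_mem _ hi
    rw [hβ, Ideal.mem_span_singleton] at this
    exact this
  have hβm : β ∈ I.map phi := by rw [hβ]; exact Ideal.mem_span_singleton_self _
  have hβ0 : β ≠ 0 := by
    rintro rfl
    have hI : I ≤ ⊥ := by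
      intro i hi
      obtain ⟨m, hm⟩ := hmem i hi
      rw [Ideal.mem_bot]
      exact phi_inj (by rw [hm, zero_mul, map_zero])
    rw [le_bot_iff.1 hI, Ideal.bot_mul, eq_comm, Ideal.span_singleton_eq_bot] at hIJ
    exact hc hIJ
  -- an element with odd real part
  obtain ⟨i, hi, m, hm, hodd⟩ : ∃ i ∈ I, ∃ m : ℤ√2, phi i = β * m ∧ m.re % 2 = 1 := by
    by_contra hcon
    push Not at hcon
    have hle : I.map phi ≤ Ideal.span {β * ⟨0, 1⟩} := by
      rw [Ideal.map_le_iff_le_comap]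
      intro i hi
      obtain ⟨m, hm⟩ := hmem i hi
      have h2 := hcon i hi m hm
      rw [Ideal.mem_comap, Ideal.mem_span_singleton, hm]
      refine ⟨⟨m.im, m.re / 2⟩, ?_⟩
      rw [mul_assoc]
      congr 1
      ext
      · simp; omega
      · simp
    have := hle hβm
    rw [Ideal.mem_span_singleton] at this
    obtain ⟨t, ht⟩ := this
    rw [mul_assoc] at ht
    have h1 : (1 : ℤ√2) = ⟨0, 1⟩ * t := mul_left_cancel₀ hβ0 (by rw [mul_one]; exact ht)
    have h2 := congrArg Zsqrtd.re h1
    simp at h2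
    omega
  obtain ⟨α, hα, w, w', hαw, hww⟩ : ∃ α ∈ I, ∃ w w' : ℤ√2, phi α = β * w ∧ w * w' = 1 := by
    rcases Int.emod_two_eq_zero_or_one m.im with h0 | h0
    · obtain ⟨j, hj, hj'⟩ := two_mul_mem I β hβm ⟨m.re / 2, m.im / 2⟩
      refine ⟨i - j, I.sub_mem hi hj, 1, 1, ?_, by simp⟩
      rw [map_sub, hm, hj', mul_comm _ β, ← mul_sub]
      congr 1
      ext
      · simp; omega
      · simp; omega
    · obtain ⟨j, hj, hj'⟩ := two_mul_mem I β hβm ⟨m.re / 2, m.im / 2⟩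
      refine ⟨i - j, I.sub_mem hi hj, ⟨1, 1⟩, ⟨-1, 1⟩, ?_, by ext <;> simp⟩
      rw [map_sub, hm, hj', mul_comm _ β, ← mul_sub]
      congr 1
      ext
      · simp; omega
      · simp; omega
  have hmem' : ∀ i ∈ I, ∃ n, phi i = phi α * n := by
    intro i hi
    obtain ⟨m, hm⟩ := hmem i hi
    refine ⟨w' * m, ?_⟩
    rw [hm, hαw]
    linear_combination (-β * m) * hww
  refine ⟨α, le_antisymm ?_ ((Ideal.span_singleton_le_iff_mem _).2 hα)⟩
  intro j hj
  obtain ⟨n, hn⟩ := hmem' j hj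
  rw [Ideal.mem_span_singleton]
  rcases Int.emod_two_eq_zero_or_one n.im with h0 | h0
  · refine ⟨⟨n.re, n.im / 2⟩, phi_inj ?_⟩
    rw [hn, map_mul]
    congr 1
    rw [phi_apply]
    ext
    · simp
    · simp; omega
  · exfalso
    set j' := j - ⟨n.re, n.im / 2⟩ * α with hj'
    have hj'I : j' ∈ I := I.sub_mem hj (I.mul_mem_left _ hα)
    have hphij : phi j' = phi α * ⟨0, 1⟩ := by
      rw [hj', map_sub, map_mul, hn, mul_comm _ (phi α), ← mul_sub]
      congr 1
      rw [phi_apply]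
      ext
      · simp
      · simp; omega
    have hy : ∀ y ∈ J, ∃ s, phi α * phi y = 2 * phi c * s := by
      intro y hy
      have h1 : α * y ∈ I * J := Ideal.mul_mem_mul hα hy
      have h2 : j' * y ∈ I * J := Ideal.mul_mem_mul hj'I hy
      rw [hIJ, Ideal.mem_span_singleton] at h1 h2
      obtain ⟨x, hx⟩ := h1
      obtain ⟨x', hx'⟩ := h2
      have hx1 := congrArg phi hx
      have hx2 := congrArg phi hx'
      rw [map_mul, map_mul] at hx1 hx2
      rw [hphij] at hx2
      have h3 : (⟨0, 1⟩ : ℤ√2) * phi x = phi x' := by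
        apply mul_left_cancel₀ hphic
        rw [← hx2]
        linear_combination (-(⟨0, 1⟩ : ℤ√2)) * hx1
      have h4 := congrArg Zsqrtd.im h3
      rw [phi_apply, phi_apply] at h4
      simp at h4
      refine ⟨⟨x'.im, x.im⟩, ?_⟩
      rw [hx1, mul_comm 2 (phi c), mul_assoc]
      congr 1
      rw [phi_apply]
      ext
      · simp; omega
      · simp
    have hle : I * J ≤ (Ideal.span {2 * phi c}).comap phi := by
      rw [Ideal.mul_le]
      intro i hi y hyJ
      obtain ⟨n, hn⟩ := hmem' i hi
      obtain ⟨s, hs⟩ := hy y hyJ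
      rw [Ideal.mem_comap, Ideal.mem_span_singleton, map_mul, hn]
      exact ⟨n * s, by linear_combination n * hs⟩
    have hcm : c ∈ I * J := by rw [hIJ]; exact Ideal.mem_span_singleton_self _
    have := hle hcm
    rw [Ideal.mem_comap, Ideal.mem_span_singleton] at this
    obtain ⟨s, hs⟩ := this
    have h1 : (1 : ℤ√2) = 2 * s := mul_left_cancel₀ hphic (by rw [mul_one]; linear_combination hs)
    have h2 := congrArg Zsqrtd.re h1
    simp at h2
    omega

lemma class_n (m : ℤ) (hm : 4 ≤ m) : Even (classNumber (4 * (m ^ 2 - 1))) := by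
  have hns := nonsq m (by omega)
  have h0 : 0 ≤ m ^ 2 - 1 := by nlinarith
  have := isDomain_z _ h0 hns
  rw [classNumber_eq _ h0 hns]
  rcases Int.even_or_odd m with he | ⟨k, hk⟩
  · exact even_class_even _ m rfl hm he
  · rcases Int.even_or_odd k with he | ho
    · exact even_class_odd _ (k + 1) k (by rw [hk]; ring) (by omega) he.add_one (by omega) (by ring)
    · refine even_class_odd _ k (k + 1) (by rw [hk]; ring) ?_ ho (by omega) (by ring)
      obtain ⟨l, hl⟩ := ho
      omega

/-- Let `Δ = n² - 4` for `n ≥ 0` with `Δ` nonsquare. (1) If `n` is even, `O_Δ` is maximal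
and `h_Δ = 1`, then `n ∈ {0, 4}` (so `Δ ∈ {-4, 12}`). (2) If `n ≡ 2 (mod 4)` and `n > 6`,
then `h_Δ` is even, regardless of maximality; while for `n = 6` (`Δ = 32`), `h_{32} = 1`. -/
theorem classNumber_sub_even_cases :
    (∀ n : ℤ, 0 ≤ n → Even n → ¬ IsSquare (n ^ 2 - 4) → IsMaximalOrder (n ^ 2 - 4) →
      classNumber (n ^ 2 - 4) = 1 → n = 0 ∨ n = 4) ∧
    (∀ n : ℤ, n % 4 = 2 → 6 < n → Even (classNumber (n ^ 2 - 4))) ∧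
    classNumber 32 = 1 := by
  refine ⟨?_, ?_, ?_⟩
  · rintro n hn ⟨m, rfl⟩ hs hmax hcl
    have e : (m + m) ^ 2 - 4 = 4 * (m ^ 2 - 1) := by ring
    by_cases hm : 4 ≤ m
    · rw [e] at hcl
      have := class_n m hm
      rw [hcl] at this
      exact absurd this (by decide)
    · have h0 : 0 ≤ m := by omega
      interval_cases m
      · left; rfl
      · exact absurd ⟨0, by norm_num⟩ hs
      · right; rfl
      · exact absurd hmax (by norm_num; exact not_max)
  · intro n hn h6
    obtain ⟨m, rfl⟩ : ∃ m, n = m + m := ⟨n / 2, by omega⟩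
    have e : (m + m) ^ 2 - 4 = 4 * (m ^ 2 - 1) := by ring
    rw [e]
    exact class_n m (by omega)
  · have := isDomain_z 8 (by norm_num) nonsq8
    rw [show (32 : ℤ) = 4 * 8 by norm_num, classNumber_eq 8 (by norm_num) nonsq8]
    exact card_one_of_ideal principal_z8
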